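/- arXiv:hep-th/0107047 — 4 statements merged into one kernel-verified Lean document; each statement's English description precedes it below -/
import Mathlib

section
/- For every h = (a,b,c,d) ∈ ℂ⁴ and all nonzero x, x' ∈ ℂ, the identity R(x/x')·(L_h(x) ⊗_aux 1)·(1 ⊗_aux L_h(x')) = (1 ⊗_aux L_h(x'))·(L_h(x) ⊗_aux 1)·R(x/x') holds as an equality of 4×4 matrices whose entries are linear operators on ℂ^N (entries of the two factors being composed as operators on the same quantum space ℂ^N). -/
/-! The only property of the operators that matters is the Weyl relation `Z X = ω X Z`
(`Zop_mul_Xop`). It rewrites every product of entries of the two `L`-operators as a scalar multiple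
of an ordered word in `X` and `Z` (`X` to the left). Comparing the coefficients of these words, each
of the sixteen entries of the relation becomes an identity of rational functions in `x`, `x'`, `ω`
with polynomial dependence on `a`, `b`, `c`, `d`. -/

open Matrix Polynomial

noncomputable section

/-- The operator `Z` on `ℂ^N`: `(Zv)_k = ω^k v_k`. -/
def Zop (N : ℕ) (ω : ℂ) : Matrix (ZMod N) (ZMod N) ℂ :=
  Matrix.diagonal fun k => ω ^ k.val

/-- The operator `X` on `ℂ^N`: `(Xv)_k = v_{k-1}`. -/
def Xop (N : ℕ) : Matrix (ZMod N) (ZMod N) ℂ :=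
  Matrix.of fun k k' => if k' = k - 1 then 1 else 0

/-- The operator `Y := Z * X` on `ℂ^N`. -/
def Yop (N : ℕ) [NeZero N] (ω : ℂ) : Matrix (ZMod N) (ZMod N) ℂ :=
  Zop N ω * Xop N

/-- The `L`-operator `L_h(x)`, a 2×2 matrix of operators on `ℂ^N`, for
`h = (a,b,c,d) ∈ ℂ⁴`: first row `(aY, xbX)`, second row `(xcZ, d·I)`. -/
def Lop (N : ℕ) [NeZero N] (ω : ℂ) (h : ℂ × ℂ × ℂ × ℂ) (x : ℂ) :
    Matrix (Fin 2) (Fin 2) (Matrix (ZMod N) (ZMod N) ℂ) :=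
  Matrix.of
    ![![h.1 • Yop N ω, (x * h.2.1) • Xop N],
      ![(x * h.2.2.1) • Zop N ω, h.2.2.2 • (1 : Matrix (ZMod N) (ZMod N) ℂ)]]

/-- `A ⊗_aux 1`: the 4×4 operator matrix with entries `(A ⊗ 1)_{(i,j),(k,l)} = A_{ik} δ_{jl}`. -/
def auxL (N : ℕ) (A : Matrix (Fin 2) (Fin 2) (Matrix (ZMod N) (ZMod N) ℂ)) :
    Matrix (Fin 2 × Fin 2) (Fin 2 × Fin 2) (Matrix (ZMod N) (ZMod N) ℂ) :=
  Matrix.of fun p q => if p.2 = q.2 then A p.1 q.1 else 0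

/-- `1 ⊗_aux A`: the 4×4 operator matrix with entries `(1 ⊗ A)_{(i,j),(k,l)} = δ_{ik} A_{jl}`. -/
def auxR (N : ℕ) (A : Matrix (Fin 2) (Fin 2) (Matrix (ZMod N) (ZMod N) ℂ)) :
    Matrix (Fin 2 × Fin 2) (Fin 2 × Fin 2) (Matrix (ZMod N) (ZMod N) ℂ) :=
  Matrix.of fun p q => if p.1 = q.1 then A p.2 q.2 else 0

/-- The scalar 4×4 `R`-matrix of the (modified) XXZ model; rows and columns indexed by
pairs in `{1,2}²` (here 0-based as `Fin 2 × Fin 2`). -/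
def Rmat (ω x : ℂ) : Matrix (Fin 2 × Fin 2) (Fin 2 × Fin 2) ℂ :=
  Matrix.of fun p q =>
    if p = q then
      (if p = ((0 : Fin 2), (0 : Fin 2)) ∨ p = ((1 : Fin 2), (1 : Fin 2)) then x * ω - x⁻¹
       else if p = ((0 : Fin 2), (1 : Fin 2)) then ω * (x - x⁻¹)
       else x - x⁻¹)
    else if (p = ((0 : Fin 2), (1 : Fin 2)) ∧ q = ((1 : Fin 2), (0 : Fin 2))) ∨
            (p = ((1 : Fin 2), (0 : Fin 2)) ∧ q = ((0 : Fin 2), (1 : Fin 2))) then ω - 1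
    else 0

/-- The `R`-matrix acting entrywise as scalar multiples of the identity operator on `ℂ^N`. -/
def Rop (N : ℕ) [NeZero N] (ω x : ℂ) :
    Matrix (Fin 2 × Fin 2) (Fin 2 × Fin 2) (Matrix (ZMod N) (ZMod N) ℂ) :=
  (Rmat ω x).map fun z => z • (1 : Matrix (ZMod N) (ZMod N) ℂ)

/-- The Weyl relation `Z X = ω X Z`. The wrap-around at `k = 0` uses `ω ^ N = 1`. -/
lemma Zop_mul_Xop (N : ℕ) [NeZero N] (ω : ℂ) (hω : ω ^ N = 1) :
    Zop N ω * Xop N = ω • (Xop N * Zop N ω) := by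
  -- Since `ω ^ N = 1`, the power `ω ^ k.val` depends only on the residue class of the exponent.
  have hval (j k : ZMod N) (h : j = k - 1) : ω ^ k.val = ω * ω ^ j.val := by
    rw [← pow_succ']
    refine pow_eq_pow_of_modEq ?_ hω
    rw [← ZMod.natCast_eq_natCast_iff]
    simp [h]
  ext k j
  simp only [Zop, Xop, Matrix.diagonal_mul, Matrix.smul_apply, Matrix.mul_diagonal,
    Matrix.of_apply, smul_eq_mul]
  split_ifs with h
  · simpa using hval j k h
  · simp

/-- the Yang–Baxter relation
`R(x/x')·(L_h(x) ⊗_aux 1)·(1 ⊗_aux L_h(x')) = (1 ⊗_aux L_h(x'))·(L_h(x) ⊗_aux 1)·R(x/x')`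
for every `h = (a,b,c,d) ∈ ℂ⁴` and all nonzero `x, x' ∈ ℂ`. -/
theorem yang_baxter_relation (M : ℕ) (hM : 1 ≤ M) (ω : ℂ)
    (hω : IsPrimitiveRoot ω (2 * M + 1)) (a b c d : ℂ) (x x' : ℂ)
    (hx : x ≠ 0) (hx' : x' ≠ 0) :
    Rop (2 * M + 1) ω (x / x') * auxL (2 * M + 1) (Lop (2 * M + 1) ω (a, b, c, d) x) *
        auxR (2 * M + 1) (Lop (2 * M + 1) ω (a, b, c, d) x') =
      auxR (2 * M + 1) (Lop (2 * M + 1) ω (a, b, c, d) x') *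
        auxL (2 * M + 1) (Lop (2 * M + 1) ω (a, b, c, d) x) *
        Rop (2 * M + 1) ω (x / x') := by
  have hZX := Zop_mul_Xop (2 * M + 1) ω hω.pow_eq_one
  -- The Weyl relation under a right factor, for reordering words of length three and four.
  have hZX' (W : Matrix (ZMod (2 * M + 1)) (ZMod (2 * M + 1)) ℂ) :
      Zop (2 * M + 1) ω * (Xop (2 * M + 1) * W) =
        ω • (Xop (2 * M + 1) * (Zop (2 * M + 1) ω * W)) := by
    rw [← mul_assoc, hZX, smul_mul_assoc, mul_assoc]
  have hY : Yop (2 * M + 1) ω = ω • (Xop (2 * M + 1) * Zop (2 * M + 1) ω) := hZX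
  ext1 ⟨i, j⟩ ⟨k, l⟩
  fin_cases i <;> fin_cases j <;> fin_cases k <;> fin_cases l <;>
    simp [Matrix.mul_apply, Fintype.sum_prod_type, Rop, Rmat, auxL, auxR, Lop, hY,
      mul_assoc, hZX, hZX', smul_smul] <;>
    (match_scalars <;> field_simp <;> ring)

end
end

section
/- For every L ≥ 1, every h⃗ = (h₀,…,h_{L−1}) ∈ (ℂ⁴)^L and all x, x' ∈ ℂ, the transfer matrices commute: T_{h⃗}(x)·T_{h⃗}(x') = T_{h⃗}(x')·T_{h⃗}(x) as operators on ⊗^Lℂ^N. -/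
/-!
Commutation of the transfer matrices by the RTT argument.  The trigonometric six-vertex matrix
`Ř(x, x')` (`rMat`), whose entries are scalars that do not involve the parameters `h`, satisfies
`Ř(x, x') (L_h(x) ⊠ L_h(x')) = (L_h(x') ⊠ L_h(x)) Ř(x, x')`, where `⊠` (`box`) is the tensor product
in the two auxiliary indices combined with the operator product in the entries (`rll`).  This only
uses `Z X = ω X Z`.  Operators at different tensor slots commute, so `⊠` is multiplicative along the
chain and the relation passes to the monodromy matrix (`rtt_list`).

Since `Ř(x, x') Ř(x', x) = r(x, x') r(x', x) · 1` with `r(x, x') = x'² - ω x²` (`rMat_mul_swap`), taking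
the trace gives `r(x, x') r(x', x) [T(x), T(x')] = 0`.  For fixed `x ≠ 0` the scalar factor vanishes
at finitely many `x'` only, and both sides of the claim are continuous in `x'`, which settles the
remaining points; for `x = 0` the factor vanishes only at `x' = 0`, where the claim is trivial.
-/

open Matrix Polynomial

noncomputable section

/-- Embedding of an operator on `ℂ^N` as an operator on `⊗^L ℂ^N` acting on the `j`-th
tensor slot. -/
def emb (N L : ℕ) [NeZero N] [NeZero L] (j : ZMod L) (A : Matrix (ZMod N) (ZMod N) ℂ) :
    Matrix (ZMod L → ZMod N) (ZMod L → ZMod N) ℂ :=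
  Matrix.of fun k k' =>
    A (k j) (k' j) * ∏ i ∈ Finset.univ.erase j, (if k i = k' i then (1 : ℂ) else 0)

/-- The monodromy matrix `L_{h⃗}(x) = L_{h₀}(x) ⋯ L_{h_{L-1}}(x)`, a 2×2 matrix of
operators on `⊗^L ℂ^N`, the operator entries of the `j`-th factor acting on the
`j`-th tensor slot. -/
def mono (N L : ℕ) [NeZero N] [NeZero L] (ω : ℂ) (h : ZMod L → ℂ × ℂ × ℂ × ℂ) (x : ℂ) :
    Matrix (Fin 2) (Fin 2) (Matrix (ZMod L → ZMod N) (ZMod L → ZMod N) ℂ) :=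
  ((List.finRange L).map fun j =>
    (Lop N ω (h ((j : ℕ) : ZMod L)) x).map (emb N L ((j : ℕ) : ZMod L))).prod

/-- The transfer matrix `T_{h⃗}(x)`: the trace of the monodromy matrix over the 2×2
auxiliary indices. -/
def transfer (N L : ℕ) [NeZero N] [NeZero L] (ω : ℂ) (h : ZMod L → ℂ × ℂ × ℂ × ℂ)
    (x : ℂ) : Matrix (ZMod L → ZMod N) (ZMod L → ZMod N) ℂ :=
  mono N L ω h x 0 0 + mono N L ω h x 1 1

/-! ### The six-vertex matrix and the exchange relations -/

section RMatrix

variable {𝓐 : Type*} [Ring 𝓐]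

/-- The product `P ⊠ Q` of two auxiliary matrices with operator entries: the auxiliary spaces are
tensored and the entries are multiplied, those of `P` on the left. -/
def box (P Q : Matrix (Fin 2) (Fin 2) 𝓐) : Matrix (Fin 2 × Fin 2) (Fin 2 × Fin 2) 𝓐 :=
  Matrix.of fun p q => P p.1 q.1 * Q p.2 q.2

lemma trace_box (P Q : Matrix (Fin 2) (Fin 2) 𝓐) :
    (box P Q).trace = (P 0 0 + P 1 1) * (Q 0 0 + Q 1 1) := by
  simp [Matrix.trace, box, Fintype.sum_prod_type, Fin.sum_univ_two]
  noncomm_ring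

lemma box_mul_mul (P Q P' Q' : Matrix (Fin 2) (Fin 2) 𝓐)
    (hc : ∀ i j k l, Commute (Q i j) (P' k l)) :
    box (P * P') (Q * Q') = box P Q * box P' Q' := by
  ext p q
  simp only [box, Matrix.of_apply, Matrix.mul_apply, Finset.sum_mul_sum, Fintype.sum_prod_type]
  refine Finset.sum_congr rfl fun i _ => Finset.sum_congr rfl fun j _ => ?_
  rw [mul_assoc, mul_assoc, ← mul_assoc (P' _ _), ← mul_assoc (Q _ _), (hc _ _ _ _).eq]

variable [Algebra ℂ 𝓐]

/-- The braid form `Ř(x, x')` of the six-vertex matrix, acting on the two auxiliary spaces. -/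
def rMat (ω x x' : ℂ) : Matrix (Fin 2 × Fin 2) (Fin 2 × Fin 2) ℂ :=
  Matrix.of fun p q =>
    if p = q then
      (if p.1 = p.2 then x' ^ 2 - ω * x ^ 2 else (1 - ω) * x * x')
    else if p = (0, 1) ∧ q = (1, 0) then x' ^ 2 - x ^ 2
    else if p = (1, 0) ∧ q = (0, 1) then ω * (x' ^ 2 - x ^ 2)
    else 0

/-- Unitarity of the six-vertex matrix. -/
lemma rMat_mul_swap (ω x x' : ℂ) :
    rMat ω x x' * rMat ω x' x
      = ((x' ^ 2 - ω * x ^ 2) * (x ^ 2 - ω * x' ^ 2)) • (1 : Matrix _ _ ℂ) := by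
  ext ⟨i, j⟩ ⟨k, l⟩
  fin_cases i <;> fin_cases j <;> fin_cases k <;> fin_cases l <;>
    simp [rMat, Matrix.mul_apply, Fintype.sum_prod_type, Fin.sum_univ_two] <;> ring

/-- The matrix `Ř(x, x')` with its entries regarded as scalars in the algebra `𝓐`. -/
def rOp (𝓐 : Type*) [Ring 𝓐] [Algebra ℂ 𝓐] (ω x x' : ℂ) :
    Matrix (Fin 2 × Fin 2) (Fin 2 × Fin 2) 𝓐 :=
  (rMat ω x x').map (algebraMap ℂ 𝓐)

lemma rOp_mul_swap (ω x x' : ℂ) :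
    rOp 𝓐 ω x x' * rOp 𝓐 ω x' x
      = ((x' ^ 2 - ω * x ^ 2) * (x ^ 2 - ω * x' ^ 2)) • (1 : Matrix _ _ 𝓐) := by
  rw [rOp, rOp, ← Matrix.map_mul, rMat_mul_swap]
  ext p q
  simp only [Matrix.map_apply, Matrix.smul_apply, Matrix.one_apply]
  split_ifs
  · rw [smul_eq_mul, mul_one, Algebra.algebraMap_eq_smul_one]
  · simp

/-- Cyclicity of the trace holds over the noncommutative ring `𝓐` when one factor has scalar
entries. -/
lemma trace_rOp_mul (ω x x' : ℂ) (B : Matrix (Fin 2 × Fin 2) (Fin 2 × Fin 2) 𝓐) :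
    (rOp 𝓐 ω x x' * B).trace = (B * rOp 𝓐 ω x x').trace := by
  simp only [Matrix.trace, Matrix.diag_apply, Matrix.mul_apply]
  rw [Finset.sum_comm]
  simp only [rOp, Matrix.map_apply, Algebra.commutes]

/-- The relation `Ř(x, x') (P ⊠ Q) = (Q ⊠ P) Ř(x, x')` makes the traces of `P` and `Q` commute, up to
the scalar that appears in the unitarity relation. -/
lemma trace_comm_of_rtt (ω x x' : ℂ) (P Q : Matrix (Fin 2) (Fin 2) 𝓐)
    (h : rOp 𝓐 ω x x' * box P Q = box Q P * rOp 𝓐 ω x x') :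
    ((x' ^ 2 - ω * x ^ 2) * (x ^ 2 - ω * x' ^ 2)) • ((P 0 0 + P 1 1) * (Q 0 0 + Q 1 1))
      = ((x' ^ 2 - ω * x ^ 2) * (x ^ 2 - ω * x' ^ 2)) • ((Q 0 0 + Q 1 1) * (P 0 0 + P 1 1)) := by
  rw [← trace_box, ← trace_box, ← Matrix.trace_smul, ← Matrix.trace_smul]
  have e1 := rOp_mul_swap (𝓐 := 𝓐) ω x' x
  rw [mul_comm] at e1
  calc _ = (rOp 𝓐 ω x' x * (rOp 𝓐 ω x x' * box P Q)).trace := by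
        rw [← mul_assoc, e1, smul_mul_assoc, one_mul]
    _ = (box Q P * (rOp 𝓐 ω x x' * rOp 𝓐 ω x' x)).trace := by
        rw [h, trace_rOp_mul, mul_assoc]
    _ = _ := by rw [rOp_mul_swap, mul_smul_comm, mul_one]

/-- The `L`-operator built from any two elements `X`, `Z` of a complex algebra. -/
def lGen (X Z : 𝓐) (h : ℂ × ℂ × ℂ × ℂ) (x : ℂ) : Matrix (Fin 2) (Fin 2) 𝓐 :=
  Matrix.of
    ![![h.1 • (Z * X), (x * h.2.1) • X], ![(x * h.2.2.1) • Z, h.2.2.2 • (1 : 𝓐)]]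

/-- The local exchange relation; `Z X = ω X Z` is all that is needed of the two operators. -/
lemma rll (ω : ℂ) (X Z : 𝓐) (hZX : Z * X = ω • (X * Z)) (h : ℂ × ℂ × ℂ × ℂ) (x x' : ℂ) :
    rOp 𝓐 ω x x' * box (lGen X Z h x) (lGen X Z h x')
      = box (lGen X Z h x') (lGen X Z h x) * rOp 𝓐 ω x x' := by
  have hZX' : ∀ W, Z * (X * W) = ω • (X * (Z * W)) := fun W => by
    rw [← mul_assoc, hZX, smul_mul_assoc, mul_assoc]
  ext ⟨i, j⟩ ⟨k, l⟩
  fin_cases i <;> fin_cases j <;> fin_cases k <;> fin_cases l <;>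
    simp [rOp, rMat, box, lGen, Matrix.mul_apply, Fintype.sum_prod_type, Fin.sum_univ_two,
      Algebra.algebraMap_eq_smul_one, mul_assoc, hZX, hZX', smul_smul, -map_sub, -map_mul,
      -map_pow] <;>
    (try module)

/-- The exchange relation passes from one site to a chain of sites acting on commuting copies. -/
lemma rtt_list {ι : Type*} (ω x x' : ℂ) (F : ι → ℂ → Matrix (Fin 2) (Fin 2) 𝓐)
    (hF : ∀ i, rOp 𝓐 ω x x' * box (F i x) (F i x') = box (F i x') (F i x) * rOp 𝓐 ω x x')
    (hc : ∀ i j, i ≠ j → ∀ y y' a b c d, Commute (F i y a b) (F j y' c d))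
    (l : List ι) (hl : l.Nodup) :
    rOp 𝓐 ω x x' * box (l.map (F · x)).prod (l.map (F · x')).prod
      = box (l.map (F · x')).prod (l.map (F · x)).prod * rOp 𝓐 ω x x' := by
  have hcl : ∀ (l : List ι) (i : ι), i ∉ l → ∀ y y' a b c d,
      Commute (F i y a b) ((l.map (F · y')).prod c d) := by
    intro l
    induction l with
    | nil =>
      intro i _ y y' a b c d
      by_cases hcd : c = d <;> simp [hcd]
    | cons j l ih =>
      intro i hi y y' a b c d
      rw [List.mem_cons, not_or] at hi
      simp only [List.map_cons, List.prod_cons, Matrix.mul_apply]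
      exact Commute.sum_right _ _ _ fun e _ =>
        (hc i j hi.1 _ _ _ _ _ _).mul_right (ih i hi.2 _ _ _ _ _ _)
  induction l with
  | nil =>
    have h1 : box (1 : Matrix (Fin 2) (Fin 2) 𝓐) 1 = 1 := by
      ext ⟨i, j⟩ ⟨k, l⟩
      simp only [box, Matrix.of_apply, Matrix.one_apply, Prod.mk.injEq]
      split_ifs <;> simp_all
    simp [h1]
  | cons i l ih =>
    rw [List.nodup_cons] at hl
    simp only [List.map_cons, List.prod_cons]
    rw [box_mul_mul _ _ _ _ fun a b c d => hcl l i hl.1 _ _ _ _ _ _,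
      box_mul_mul _ _ _ _ fun a b c d => hcl l i hl.1 _ _ _ _ _ _, ← mul_assoc, hF, mul_assoc,
      ih hl.2, mul_assoc]

end RMatrix

/-! ### Operators at a single tensor slot -/

section Emb

/-- The operator `⊗ᵢ Aᵢ` on the tensor power. -/
def tens {ι n : Type*} [Fintype ι] (A : ι → Matrix n n ℂ) : Matrix (ι → n) (ι → n) ℂ :=
  Matrix.of fun k k' => ∏ i, A i (k i) (k' i)

lemma tens_mul {ι n : Type*} [Fintype ι] [DecidableEq ι] [Fintype n]
    (A B : ι → Matrix n n ℂ) : tens (A * B) = tens A * tens B := by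
  ext k k'
  simp only [tens, Matrix.of_apply, Pi.mul_apply, Matrix.mul_apply, ← Finset.prod_mul_distrib]
  rw [Finset.prod_univ_sum, Fintype.piFinset_univ]

lemma tens_one {ι n : Type*} [Fintype ι] [Fintype n] [DecidableEq n] :
    tens (1 : ι → Matrix n n ℂ) = 1 := by
  ext k k'
  simp [tens, Matrix.one_apply, Finset.prod_ite_zero, funext_iff]

variable (N L : ℕ) [NeZero N] [NeZero L]

lemma emb_eq_tens (j : ZMod L) (A : Matrix (ZMod N) (ZMod N) ℂ) :
    emb N L j A = tens (Pi.mulSingle j A) := by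
  ext k k'
  simp only [emb, tens, Matrix.of_apply]
  rw [← Finset.mul_prod_erase _ _ (Finset.mem_univ j), Pi.mulSingle_eq_same]
  congr 1
  refine Finset.prod_congr rfl fun i hi => ?_
  rw [Pi.mulSingle_eq_of_ne (Finset.ne_of_mem_erase hi), Matrix.one_apply]

lemma emb_mul (j : ZMod L) (A B : Matrix (ZMod N) (ZMod N) ℂ) :
    emb N L j (A * B) = emb N L j A * emb N L j B := by
  simp only [emb_eq_tens, Pi.mulSingle_mul, tens_mul]

lemma emb_one (j : ZMod L) : emb N L j 1 = 1 := by
  rw [emb_eq_tens, Pi.mulSingle_one, tens_one]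

lemma emb_smul (j : ZMod L) (c : ℂ) (A : Matrix (ZMod N) (ZMod N) ℂ) :
    emb N L j (c • A) = c • emb N L j A := by
  ext k k'
  simp [emb, mul_assoc]

lemma emb_commute {i j : ZMod L} (hij : i ≠ j) (A B : Matrix (ZMod N) (ZMod N) ℂ) :
    Commute (emb N L i A) (emb N L j B) := by
  rw [emb_eq_tens, emb_eq_tens, Commute, SemiconjBy, ← tens_mul, ← tens_mul]
  exact congrArg tens
    (Pi.mulSingle_commute (f := fun _ : ZMod L => Matrix (ZMod N) (ZMod N) ℂ) hij A B).eq

lemma Lop_map_emb (ω : ℂ) (h : ℂ × ℂ × ℂ × ℂ) (x : ℂ) (j : ZMod L) :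
    (Lop N ω h x).map (emb N L j) = lGen (emb N L j (Xop N)) (emb N L j (Zop N ω)) h x := by
  ext1 a b
  fin_cases a <;> fin_cases b <;> simp [Lop, lGen, Yop, emb_smul, emb_mul, emb_one]

end Emb

/-! ### The transfer matrix -/

lemma pow_mod_of_pow_eq_one {ω : ℂ} {N : ℕ} (hω : ω ^ N = 1) (m : ℕ) :
    ω ^ m = ω ^ (m % N) := by
  conv_lhs => rw [← Nat.div_add_mod m N, pow_add, pow_mul, hω, one_pow, one_mul]

lemma mono_continuous (N L : ℕ) [NeZero N] [NeZero L] (ω : ℂ) (h : ZMod L → ℂ × ℂ × ℂ × ℂ) :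
    Continuous (mono N L ω h) := by
  unfold mono
  refine continuous_list_prod _ fun j _ => ?_
  simp only [Lop_map_emb]
  refine continuous_matrix fun a b => ?_
  fin_cases a <;> fin_cases b <;> simp [lGen] <;> fun_prop

lemma transfer_continuous (N L : ℕ) [NeZero N] [NeZero L] (ω : ℂ)
    (h : ZMod L → ℂ × ℂ × ℂ × ℂ) : Continuous (transfer N L ω h) := by
  have := mono_continuous N L ω h
  exact (this.matrix_elem 0 0).add (this.matrix_elem 1 1)

/-- Commutation of the transfer matrices up to a scalar factor. -/
lemma transfer_comm_smul (N L : ℕ) [NeZero N] [NeZero L] (ω : ℂ) (hω : ω ^ N = 1)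
    (h : ZMod L → ℂ × ℂ × ℂ × ℂ) (x x' : ℂ) :
    ((x' ^ 2 - ω * x ^ 2) * (x ^ 2 - ω * x' ^ 2)) • (transfer N L ω h x * transfer N L ω h x')
      = ((x' ^ 2 - ω * x ^ 2) * (x ^ 2 - ω * x' ^ 2)) •
        (transfer N L ω h x' * transfer N L ω h x) := by
  let F : Fin L → ℂ → Matrix (Fin 2) (Fin 2) (Matrix (ZMod L → ZMod N) (ZMod L → ZMod N) ℂ) :=
    fun j y => (Lop N ω (h ((j : ℕ) : ZMod L)) y).map (emb N L ((j : ℕ) : ZMod L))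
  have hm : ∀ y, mono N L ω h y = ((List.finRange L).map (F · y)).prod := by
    intro y
    -- In `mono` the list of sites is first turned into a list of natural numbers.
    simp only [mono, F, List.bind_eq_flatMap, List.pure_def, ← List.map_eq_flatMap,
      List.map_map, Function.comp_def]
  refine trace_comm_of_rtt ω x x' (mono N L ω h x) (mono N L ω h x') ?_
  rw [hm, hm]
  refine rtt_list ω x x' F ?_ ?_ _ (List.nodup_finRange L)
  · intro j
    simp only [F, Lop_map_emb]
    refine rll ω _ _ ?_ _ _ _
    rw [← emb_mul, ← emb_mul, ← emb_smul, Zop_mul_Xop N ω hω]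
  · intro i j hij y y' a b c d
    refine emb_commute N L (fun e => hij (Fin.ext ?_)) _ _
    have he := congrArg ZMod.val e
    rwa [ZMod.val_natCast_of_lt i.2, ZMod.val_natCast_of_lt j.2] at he

/-- for every L ≥ 1, every h⃗ ∈ (ℂ⁴)^L and all x, x' ∈ ℂ, the transfer
matrices commute: T_{h⃗}(x)·T_{h⃗}(x') = T_{h⃗}(x')·T_{h⃗}(x) as operators on ⊗^Lℂ^N. -/
theorem transfer_matrices_commute (M L : ℕ) [NeZero L] (hM : 1 ≤ M) (ω : ℂ)
    (hω : IsPrimitiveRoot ω (2 * M + 1)) (h : ZMod L → ℂ × ℂ × ℂ × ℂ) (x x' : ℂ) :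
    transfer (2 * M + 1) L ω h x * transfer (2 * M + 1) L ω h x' =
      transfer (2 * M + 1) L ω h x' * transfer (2 * M + 1) L ω h x := by
  have hωN : ω ^ (2 * M + 1) = 1 := hω.pow_eq_one
  have hω0 : ω ≠ 0 := hω.ne_zero (by omega)
  rcases eq_or_ne x 0 with rfl | hx
  · rcases eq_or_ne x' 0 with rfl | hx'
    · rfl
    · have key := transfer_comm_smul (2 * M + 1) L ω hωN h 0 x'
      exact smul_right_injective _ (by simp [hx', hω0]) key
  -- For `x ≠ 0` the scalar factor is a nonzero polynomial in `x'`.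
  let p : ℂ[X] := (X ^ 2 - C (ω * x ^ 2)) * (C (x ^ 2) - C ω * X ^ 2)
  have hp : p ≠ 0 := by
    intro hp0
    have := congrArg (Polynomial.eval 0) hp0
    simp [p, hω0, hx] at this
  have hd : Dense ((p.roots.toFinset : Set ℂ)ᶜ) := (Finset.finite_toSet _).countable.dense_compl ℂ
  have hT := transfer_continuous (2 * M + 1) L ω h
  refine congrFun (Continuous.ext_on (f := fun y =>
      transfer (2 * M + 1) L ω h x * transfer (2 * M + 1) L ω h y)
    (g := fun y => transfer (2 * M + 1) L ω h y * transfer (2 * M + 1) L ω h x) hd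
    (continuous_const.mul hT) (hT.mul continuous_const) ?_) x'
  intro y hy
  have hy' : ¬ p.eval y = 0 := by simpa [hp] using hy
  exact smul_right_injective _ (by simpa [p] using hy')
    (transfer_comm_smul (2 * M + 1) L ω hωN h x y)

end
end

section
/- Let p = (x, ξ₀,…,ξ_{L−1}) ∈ C_{h⃗} and fix j ∈ {0,…,L−1}. If ξ_j ≠ 0 and ξ_{j+1}xc_jω^m − d_j ≠ 0 for every m ∈ {1,…,N}, then ∏_{m=1}^{N} (ξ_{j+1}a_jω^m − xb_j)/(−ξ_j(ξ_{j+1}xc_jω^m − d_j)) = 1; consequently there is a unique vector |p_j⟩ ∈ ℂ^N (with components indexed by ℤ/N) satisfying ⟨0|p_j⟩ = 1 and ⟨m|p_j⟩ = ⟨m−1|p_j⟩·(ξ_{j+1}a_jω^m − xb_j)/(−ξ_j(ξ_{j+1}xc_jω^m − d_j)) for all m ∈ ℤ. -/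
/-!
For odd `N` and a primitive `N`-th root of unity `ω`, `∏ (A ω^m - B) = A^N - B^N`
(`prod_mul_pow_sub`). Applied to numerator and denominator, this turns the cyclic product of the
ratios into `(A^N - B^N) / (-ξ_j^N (C^N - D^N))`, which is `1` by the equation of the curve.
A multiplicative recurrence around the cycle `ℤ/N` has a unique solution with prescribed value
`1` at `0` as soon as the product of its ratios is `1` (`existsUnique_cyclic_recurrence`): the
partial products give the solution, and the product condition is what makes it close up at `0`.
-/

open Matrix Polynomial

noncomputable section

/-- The spectral curve `C_{h⃗}`: the set of points `(x, ξ₀,…,ξ_{L−1})` with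
`ξ_j^N (ξ_{j+1}^N x^N c_j^N − d_j^N) = (−1)^N (ξ_{j+1}^N a_j^N − x^N b_j^N)` for all `j`
(cyclically). -/
def onCurve (N L : ℕ) [NeZero L] (a b c d : ZMod L → ℂ) (x : ℂ) (ξ : ZMod L → ℂ) : Prop :=
  ∀ j : ZMod L,
    ξ j ^ N * (ξ (j + 1) ^ N * x ^ N * c j ^ N - d j ^ N) =
      (-1 : ℂ) ^ N * (ξ (j + 1) ^ N * a j ^ N - x ^ N * b j ^ N)

lemma prod_mul_pow_sub {N : ℕ} (hN : Odd N) {ω : ℂ} (hω : IsPrimitiveRoot ω N) (A B : ℂ) :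
    ∏ m ∈ Finset.range N, (A * ω ^ (m + 1) - B) = A ^ N - B ^ N := by
  have hfac : ∏ m ∈ Finset.range N, (B - ω ^ m * A) = B ^ N - A ^ N := by
    rw [hω.pow_sub_pow_eq_prod_sub_mul B A hN.pos]
    refine Finset.prod_bij (fun m _ => ω ^ m) ?_ ?_ ?_ (fun _ _ => rfl)
    · intro m _
      rw [mem_nthRootsFinset hN.pos, ← pow_mul, mul_comm, pow_mul, hω.pow_eq_one, one_pow]
    · intro m hm k hk h
      exact hω.pow_inj (Finset.mem_range.mp hm) (Finset.mem_range.mp hk) h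
    · intro ζ hζ
      have : NeZero N := ⟨hN.pos.ne'⟩
      obtain ⟨i, hi, h⟩ := hω.eq_pow_of_pow_eq_one ((mem_nthRootsFinset hN.pos _).mp hζ)
      exact ⟨i, Finset.mem_range.mpr hi, h⟩
  -- Replacing `A` by `A ω` shifts the exponents by one and does not change `A ^ N`.
  have hshift : ∏ m ∈ Finset.range N, (A * ω ^ (m + 1) - B) =
      ∏ m ∈ Finset.range N, (A * ω ^ m - B) := by
    have h1 := Finset.prod_range_succ (fun m => A * ω ^ m - B) N
    rw [Finset.prod_range_succ', hω.pow_eq_one, pow_zero] at h1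
    by_cases h0 : A * 1 - B = 0
    · obtain ⟨n, rfl⟩ : ∃ n, N = n + 1 := ⟨N - 1, by have := hN.pos; omega⟩
      rw [Finset.prod_range_succ, Finset.prod_range_succ', hω.pow_eq_one, pow_zero]
    · exact mul_right_cancel₀ h0 h1
  rw [hshift, ← neg_sub (B ^ N), ← hfac]
  have hneg : ∀ m ∈ Finset.range N, A * ω ^ m - B = -1 * (B - ω ^ m * A) := fun m _ => by ring
  rw [Finset.prod_congr rfl hneg, Finset.prod_mul_distrib, Finset.prod_const, Finset.card_range,
    hN.neg_one_pow, neg_one_mul]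

lemma existsUnique_cyclic_recurrence (n : ℕ) (r : ZMod (n + 1) → ℂ)
    (hr : ∏ k ∈ Finset.range (n + 1), r ((k + 1 : ℕ) : ZMod (n + 1)) = 1) :
    ∃! v : ZMod (n + 1) → ℂ, v 0 = 1 ∧ ∀ m, v m = v (m - 1) * r m := by
  refine ⟨fun m => ∏ k ∈ Finset.range m.val, r ((k + 1 : ℕ) : ZMod (n + 1)), ⟨by simp, ?_⟩, ?_⟩
  · intro m
    obtain ⟨k, hk, rfl⟩ : ∃ k : ℕ, k < n + 1 ∧ m = ((k + 1 : ℕ) : ZMod (n + 1)) :=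
      ⟨(m - 1).val, ZMod.val_lt _, by simp⟩
    have hpred : (((k + 1 : ℕ) : ZMod (n + 1)) - 1).val = k := by
      rw [Nat.cast_succ, add_sub_cancel_right, ZMod.val_natCast_of_lt hk]
    simp only [hpred]
    rw [← Finset.prod_range_succ (fun k => r ((k + 1 : ℕ) : ZMod (n + 1)))]
    rcases Nat.lt_or_ge (k + 1) (n + 1) with h | h
    · rw [ZMod.val_natCast_of_lt h]
    · -- The step from `n` back to `0` is where the product condition is needed.
      obtain rfl : k = n := by omega
      rw [hr, ZMod.natCast_self, ZMod.val_zero, Finset.prod_range_zero]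
  · rintro v ⟨hv0, hv⟩
    have key : ∀ k : ℕ, v (k : ZMod (n + 1)) =
        ∏ i ∈ Finset.range k, r ((i + 1 : ℕ) : ZMod (n + 1)) := by
      intro k
      induction k with
      | zero => simpa using hv0
      | succ k ih =>
        rw [hv, Finset.prod_range_succ, ← ih, Nat.cast_succ, add_sub_cancel_right]
    funext m
    simpa using key m.val

/-- at a point of the spectral curve with `ξ_j ≠ 0` and all denominators
nonvanishing, the cyclic product of the ratios equals `1`, and consequently there is a
unique vector `|p_j⟩ ∈ ℂ^N` with `⟨0|p_j⟩ = 1` satisfying the recurrence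
`⟨m|p_j⟩ = ⟨m−1|p_j⟩·(ξ_{j+1}a_jω^m − xb_j)/(−ξ_j(ξ_{j+1}xc_jω^m − d_j))` for all `m`. -/
theorem baxter_local_factor_exists_unique (M L : ℕ) [NeZero L] (hM : 1 ≤ M) (ω : ℂ)
    (hω : IsPrimitiveRoot ω (2 * M + 1)) (a b c d : ZMod L → ℂ) (x : ℂ)
    (ξ : ZMod L → ℂ) (hp : onCurve (2 * M + 1) L a b c d x ξ) (j : ZMod L)
    (hξ : ξ j ≠ 0)
    (hden : ∀ m : ℕ, 1 ≤ m → m ≤ 2 * M + 1 → ξ (j + 1) * x * c j * ω ^ m - d j ≠ 0) :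
    (∏ m ∈ Finset.range (2 * M + 1),
        (ξ (j + 1) * a j * ω ^ (m + 1) - x * b j) /
          (-(ξ j) * (ξ (j + 1) * x * c j * ω ^ (m + 1) - d j))) = 1 ∧
    ∃! v : ZMod (2 * M + 1) → ℂ, v 0 = 1 ∧ ∀ m : ZMod (2 * M + 1),
      v m = v (m - 1) *
        ((ξ (j + 1) * a j * ω ^ m.val - x * b j) /
          (-(ξ j) * (ξ (j + 1) * x * c j * ω ^ m.val - d j))) := by
  have hodd : Odd (2 * M + 1) := odd_two_mul_add_one M
  have hprod : (∏ m ∈ Finset.range (2 * M + 1),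
      (ξ (j + 1) * a j * ω ^ (m + 1) - x * b j) /
        (-(ξ j) * (ξ (j + 1) * x * c j * ω ^ (m + 1) - d j))) = 1 := by
    have hD : ∏ m ∈ Finset.range (2 * M + 1),
        (ξ (j + 1) * x * c j * ω ^ (m + 1) - d j) ≠ 0 := by
      refine Finset.prod_ne_zero_iff.mpr fun m hm => hden _ (by omega) ?_
      have := Finset.mem_range.mp hm
      omega
    rw [prod_mul_pow_sub hodd hω] at hD
    rw [Finset.prod_div_distrib, Finset.prod_mul_distrib, prod_mul_pow_sub hodd hω,
      prod_mul_pow_sub hodd hω, Finset.prod_const, Finset.card_range,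
      div_eq_one_iff_eq (mul_ne_zero (pow_ne_zero _ (neg_ne_zero.mpr hξ)) hD), hodd.neg_pow]
    have h := hp j
    rw [hodd.neg_one_pow] at h
    simp only [mul_pow]
    linear_combination h
  refine ⟨hprod, existsUnique_cyclic_recurrence (2 * M) (fun m =>
    (ξ (j + 1) * a j * ω ^ m.val - x * b j) /
      (-(ξ j) * (ξ (j + 1) * x * c j * ω ^ m.val - d j))) ?_⟩
  rw [← hprod]
  refine Finset.prod_congr rfl fun k _ => ?_
  -- `ω ^ m` depends only on the class of `m` modulo `N`.
  have hpow : ω ^ (((k + 1 : ℕ) : ZMod (2 * M + 1))).val = ω ^ (k + 1) := by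
    rw [ZMod.val_natCast, hω.eq_orderOf, pow_mod_orderOf]
  simp only [hpow]

end
end

section
/- Let p = (x, ξ₀,…,ξ_{L−1}) ∈ C_{h⃗} be nondegenerate and assume τ₋(p) and τ₊(p) are also nondegenerate. Then the transfer matrix decouples the Baxter vector: T_{h⃗}(x)·|p⟩ = Δ₋(p)·|τ₋(p)⟩ + Δ₊(p)·|τ₊(p)⟩ in ⊗^Lℂ^N, where Δ₋(p) = ∏_{j=0}^{L−1}(d_j − xξ_{j+1}c_j) and Δ₊(p) = ∏_{j=0}^{L−1} ξ_j(a_jd_j − x²b_jc_j)/(ξ_{j+1}a_j − xb_j). -/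
open Matrix Polynomial

noncomputable section

/-- A point of the spectral curve is nondegenerate if `ξ_j ≠ 0`,
`ξ_{j+1}a_j − xb_j ≠ 0` and `ξ_{j+1}xc_jω^m − d_j ≠ 0` for all `j` and all `m ∈ ℤ/N`. -/
def nondeg (N L : ℕ) [NeZero L] (ω : ℂ) (a b c d : ZMod L → ℂ) (x : ℂ)
    (ξ : ZMod L → ℂ) : Prop :=
  ∀ j : ZMod L, ξ j ≠ 0 ∧ ξ (j + 1) * a j - x * b j ≠ 0 ∧
    ∀ m : ZMod N, ξ (j + 1) * x * c j * ω ^ m.val - d j ≠ 0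

/-- `v j` is the `j`-th local factor `|p_j⟩` of the Baxter vector at
`p = (x, ξ₀,…,ξ_{L−1})`: the vector with `⟨0|p_j⟩ = 1` and
`⟨m|p_j⟩ = ⟨m−1|p_j⟩·(ξ_{j+1}a_jω^m − xb_j)/(−ξ_j(ξ_{j+1}xc_jω^m − d_j))` for all `m`. -/
def isBaxterFamily (N L : ℕ) [NeZero L] (ω : ℂ) (a b c d : ZMod L → ℂ) (x : ℂ)
    (ξ : ZMod L → ℂ) (v : ZMod L → ZMod N → ℂ) : Prop :=
  ∀ j : ZMod L, v j 0 = 1 ∧ ∀ m : ZMod N,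
    v j m = v j (m - 1) *
      ((ξ (j + 1) * a j * ω ^ m.val - x * b j) /
        (-(ξ j) * (ξ (j + 1) * x * c j * ω ^ m.val - d j)))

/-- The Baxter vector `|p⟩ = |p₀⟩ ⊗ ⋯ ⊗ |p_{L−1}⟩ ∈ ⊗^L ℂ^N` assembled from the
local factors `v j = |p_j⟩`. -/
def baxVec (N L : ℕ) [NeZero L] (v : ZMod L → ZMod N → ℂ) : (ZMod L → ZMod N) → ℂ :=
  fun k => ∏ j : ZMod L, v j (k j)

/-- The gauge matrix `A_ξ` with rows `(1, ξ−1)` and `(1, ξ)`. -/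
def gaugeA (ξ : ℂ) : Matrix (Fin 2) (Fin 2) ℂ :=
  Matrix.of ![![1, ξ - 1], ![1, ξ]]

/-- A scalar 2×2 matrix viewed as a 2×2 matrix of operators on `⊗^L ℂ^N`. -/
def scal (N L : ℕ) [NeZero N] [NeZero L] (A : Matrix (Fin 2) (Fin 2) ℂ) :
    Matrix (Fin 2) (Fin 2) (Matrix (ZMod L → ZMod N) (ZMod L → ZMod N) ℂ) :=
  A.map fun z => z • (1 : Matrix (ZMod L → ZMod N) (ZMod L → ZMod N) ℂ)

/-- The gauge-transformed monodromy matrix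
`L̃_{h⃗}(x,ξ) = (A_{ξ₀}L_{h₀}(x)A_{ξ₁}⁻¹)⋯(A_{ξ_{L−1}}L_{h_{L−1}}(x)A_{ξ₀}⁻¹)`. -/
def gaugeMono (N L : ℕ) [NeZero N] [NeZero L] (ω : ℂ) (h : ZMod L → ℂ × ℂ × ℂ × ℂ)
    (x : ℂ) (ξ : ZMod L → ℂ) :
    Matrix (Fin 2) (Fin 2) (Matrix (ZMod L → ZMod N) (ZMod L → ZMod N) ℂ) :=
  ((List.finRange L).map fun j =>
    scal N L (gaugeA (ξ ((j : ℕ) : ZMod L))) *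
      (Lop N ω (h ((j : ℕ) : ZMod L)) x).map (emb N L ((j : ℕ) : ZMod L)) *
      scal N L (gaugeA (ξ (((j : ℕ) : ZMod L) + 1)))⁻¹).prod

/-- `Δ₋(p) = ∏_j (d_j − x ξ_{j+1} c_j)`. -/
def DeltaMinus (L : ℕ) [NeZero L] (c d : ZMod L → ℂ) (x : ℂ) (ξ : ZMod L → ℂ) : ℂ :=
  ∏ j : ZMod L, (d j - x * ξ (j + 1) * c j)

/-- `Δ₊(p) = ∏_j ξ_j (a_j d_j − x² b_j c_j)/(ξ_{j+1} a_j − x b_j)`. -/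
def DeltaPlus (L : ℕ) [NeZero L] (a b c d : ZMod L → ℂ) (x : ℂ) (ξ : ZMod L → ℂ) : ℂ :=
  ∏ j : ZMod L, ξ j * (a j * d j - x ^ 2 * b j * c j) / (ξ (j + 1) * a j - x * b j)

/-!
Each entry of the monodromy matrix is a sum of products of operators in distinct tensor slots.
Hence the coordinate at `k` of the transfer matrix applied to `|p⟩` is the trace of an ordered
product of scalar `2 × 2` matrices, the `j`-th being the coordinate at `k j` of
`L_{h_j}(x)` applied to `|p_j⟩` (`prod_emb_mulVec`, `Lop_mulVec`).

Conjugating the `j`-th factor by the gauge matrices `A_{ξ_j}` and `A_{ξ_{j+1}}` leaves the trace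
unchanged, because the gauge closes up cyclically, and the lower left entry of the result is
exactly the recursion defining `|p_j⟩`, so it vanishes. The trace of a product of upper triangular
matrices is the sum of the two diagonal products (`trace_prod_of_gauge`). The diagonal entries
satisfy, up to the constants in `Δ₋` and `Δ₊`, the recursions of `|τ₋(p)_j⟩` and `|τ₊(p)_j⟩`
(`local_minus`, `local_plus`).
-/

/-! ### Operators on tensor slots -/

/-- An operator in slot `j` acts on a vector by summing over the `j`-th coordinate alone. -/
lemma emb_mulVec (N L : ℕ) [NeZero N] [NeZero L] (j : ZMod L)
    (A : Matrix (ZMod N) (ZMod N) ℂ) (u : (ZMod L → ZMod N) → ℂ) (k : ZMod L → ZMod N) :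
    (emb N L j A).mulVec u k = ∑ m, A (k j) m * u (Function.update k j m) := by
  classical
  simp only [Matrix.mulVec, dotProduct, emb, Matrix.of_apply]
  symm
  refine Finset.sum_of_injOn (fun m => Function.update k j m) ?_ ?_ ?_ ?_
  · intro m _ m' _ h
    exact Function.update_injective k j h
  · intro m _; simp
  · intro k' _ hk'
    have : ∃ i ∈ Finset.univ.erase j, k i ≠ k' i := by
      by_contra! hcon
      refine hk' ⟨k' j, by simp, ?_⟩
      funext i
      by_cases hi : i = j
      · subst hi; simp
      · simp [hi, hcon i (by simp [hi])]
    obtain ⟨i, hi, hne⟩ := this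
    rw [Finset.prod_eq_zero hi (by simp [hne])]
    simp
  · intro m _
    rw [Finset.prod_eq_one]
    · simp
    · intro i hi
      simp [Finset.ne_of_mem_erase hi]

/-- Factors acting on distinct slots commute, so an entry of their ordered product, applied to a
tensor product and evaluated at `k`, is the same entry of a product of scalar `2 × 2` matrices;
the slots outside `l` only contribute their coordinates. -/
lemma prod_emb_mulVec (N L : ℕ) [NeZero N] [NeZero L]
    (A : ZMod L → Matrix (Fin 2) (Fin 2) (Matrix (ZMod N) (ZMod N) ℂ))
    (v : ZMod L → ZMod N → ℂ) (l : List (ZMod L)) (hl : l.Nodup) (α β : Fin 2)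
    (k : ZMod L → ZMod N) :
    ((l.map fun j => (A j).map (emb N L j)).prod α β).mulVec (baxVec N L v) k =
      (l.map fun j => (Matrix.of fun α β => (A j α β).mulVec (v j) (k j) :
        Matrix (Fin 2) (Fin 2) ℂ)).prod α β *
      ∏ i ∈ Finset.univ.filter (· ∉ l), v i (k i) := by
  classical
  induction l generalizing α k with
  | nil =>
    by_cases h : α = β
    · subst h; simp [baxVec]
    · simp [h]
  | cons j l ih =>
    obtain ⟨hj, hl⟩ := List.nodup_cons.1 hl
    have hsplit : Finset.univ.filter (· ∉ l) =
        insert j (Finset.univ.filter (· ∉ j :: l)) := by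
      ext i
      by_cases hi : i = j
      · subst hi; simp [hj]
      · simp [hi]
    have hout : j ∉ Finset.univ.filter (· ∉ j :: l) := by simp
    have key : ∀ γ, (((A j).map (emb N L j) α γ) *
          ((l.map fun j => (A j).map (emb N L j)).prod γ β)).mulVec (baxVec N L v) k =
        (A j α γ).mulVec (v j) (k j) *
          (l.map fun j => (Matrix.of fun α β => (A j α β).mulVec (v j) (k j) :
            Matrix (Fin 2) (Fin 2) ℂ)).prod γ β *
          ∏ i ∈ Finset.univ.filter (· ∉ j :: l), v i (k i) := by
      intro γ
      rw [← Matrix.mulVec_mulVec, Matrix.map_apply, emb_mulVec]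
      simp only [Matrix.mulVec, dotProduct] at ih ⊢
      rw [mul_assoc, Finset.sum_mul]
      refine Finset.sum_congr rfl fun m _ => ?_
      rw [ih hl, hsplit, Finset.prod_insert hout]
      have h1 : ∀ i ∈ l, (Matrix.of fun α β =>
            ∑ x, A i α β (Function.update k j m i) x * v i x : Matrix (Fin 2) (Fin 2) ℂ) =
          Matrix.of fun α β => ∑ x, A i α β (k i) x * v i x := by
        intro i hi
        rw [Function.update_of_ne (fun h => hj (by rwa [← h]))]
      have h2 : ∀ i ∈ Finset.univ.filter (· ∉ j :: l),
          v i (Function.update k j m i) = v i (k i) := by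
        intro i hi
        rw [Function.update_of_ne (fun h => hout (by rw [h] at hi; exact hi))]
      rw [List.map_congr_left h1, Finset.prod_congr rfl h2, Function.update_self]
      ring
    simp only [List.map_cons, List.prod_cons]
    rw [Matrix.mul_apply, Matrix.sum_mulVec, Finset.sum_apply, Finset.sum_congr rfl
      (fun γ _ => key γ), Matrix.mul_apply, Finset.sum_mul]
    rfl

lemma prod_range_cast (L : ℕ) [NeZero L] (f : ZMod L → ℂ) :
    ∏ i ∈ Finset.range L, f (i : ZMod L) = ∏ j, f j := by
  refine Finset.prod_bij (fun i _ => (i : ZMod L)) (by simp) ?_ ?_ (by simp)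
  · intro i hi i' hi' h
    have := congrArg ZMod.val h
    rwa [ZMod.val_natCast_of_lt (Finset.mem_range.1 hi),
      ZMod.val_natCast_of_lt (Finset.mem_range.1 hi')] at this
  · intro j _
    exact ⟨j.val, Finset.mem_range.2 (ZMod.val_lt j), by simp⟩

/-- The list in `mono`, indexed by `ZMod L`. The coercion `((j : ℕ) : ZMod L)` in the left side, as
in `mono`, elaborates by first mapping the list `List.finRange L` monadically to a list of
naturals. -/
lemma finRange_map_cast {β : Type*} (L : ℕ) (f : ZMod L → β) :
    (List.finRange L).map (fun j => f ((j : ℕ) : ZMod L)) =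
      ((List.range L).map fun i : ℕ => (i : ZMod L)).map f := by
  rw [← List.map_coe_finRange_eq_range]
  simp only [List.pure_def, List.bind_eq_flatMap, ← List.map_eq_flatMap, List.map_map]
  rfl

lemma nodup_range_cast (L : ℕ) [NeZero L] :
    ((List.range L).map fun i : ℕ => (i : ZMod L)).Nodup := by
  refine List.Nodup.map_on ?_ List.nodup_range
  intro i hi i' hi' h
  have := congrArg ZMod.val h
  rwa [ZMod.val_natCast_of_lt (List.mem_range.1 hi),
    ZMod.val_natCast_of_lt (List.mem_range.1 hi')] at this

/-! ### Gauge transformation and trace -/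

/-- If gauge matrices intertwine each `M i` with an upper triangular matrix, they intertwine the
ordered product with an upper triangular matrix whose diagonal is the product of the diagonals. -/
lemma gauge_prod (M : ℕ → Matrix (Fin 2) (Fin 2) ℂ) (G : ℕ → Matrix (Fin 2) (Fin 2) ℂ)
    (s r t : ℕ → ℂ) (h : ∀ i, G i * M i = !![s i, t i; 0, r i] * G (i + 1)) (n : ℕ) :
    ∃ z, G 0 * ((List.range n).map M).prod =
      !![∏ i ∈ Finset.range n, s i, z; 0, ∏ i ∈ Finset.range n, r i] * G n := by
  induction n with
  | zero => exact ⟨0, by simp [← Matrix.one_fin_two]⟩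
  | succ n ih =>
    obtain ⟨z, hz⟩ := ih
    refine ⟨(∏ i ∈ Finset.range n, s i) * t n + z * r n, ?_⟩
    rw [List.range_succ, List.map_append, List.prod_append, ← mul_assoc, hz]
    simp only [List.map_cons, List.map_nil, List.prod_cons, List.prod_nil, mul_one]
    rw [mul_assoc, h, ← mul_assoc, Finset.prod_range_succ, Finset.prod_range_succ]
    congr 1
    simp

/-- When the gauge matrices close up cyclically, conjugation invariance of the trace leaves only
the two diagonal products. -/
lemma trace_prod_of_gauge (L : ℕ) [NeZero L] (M : ZMod L → Matrix (Fin 2) (Fin 2) ℂ)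
    (ξ s r t : ZMod L → ℂ)
    (h : ∀ i, gaugeA (ξ i) * M i = !![s i, t i; 0, r i] * gaugeA (ξ (i + 1))) :
    (((List.range L).map fun i : ℕ => (i : ZMod L)).map M).prod.trace =
      ∏ j, s j + ∏ j, r j := by
  obtain ⟨z, hz⟩ := gauge_prod (fun i => M i) (fun i => gaugeA (ξ i)) (fun i => s i)
    (fun i => r i) (fun i => t i) (fun i => by simpa using h i) L
  have hdet : IsUnit (gaugeA (ξ 0)).det := by
    simp [gaugeA, Matrix.det_fin_two]
  simp only [Nat.cast_zero, CharP.cast_eq_zero] at hz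
  rw [List.map_map]
  have e : ((List.range L).map (M ∘ fun i : ℕ => (i : ZMod L))).prod =
      (gaugeA (ξ 0))⁻¹ *
        (!![∏ i ∈ Finset.range L, s i, z; 0, ∏ i ∈ Finset.range L, r i] * gaugeA (ξ 0)) := by
    rw [← hz, Matrix.nonsing_inv_mul_cancel_left _ _ hdet]
    rfl
  rw [e, Matrix.trace_mul_comm, Matrix.mul_nonsing_inv_cancel_right _ _ hdet,
    Matrix.trace_fin_two, ← prod_range_cast, ← prod_range_cast]
  simp

/-! ### The local recursions -/

lemma root_pow_val_sub_one {N : ℕ} [NeZero N] {ω : ℂ} (h : ω ^ N = 1) (m : ZMod N) :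
    ω ^ m.val = ω ^ (m - 1).val * ω := by
  have e : m = (((m - 1).val + 1 : ℕ) : ZMod N) := by simp
  conv_lhs => rw [e, ZMod.val_natCast]
  rw [← pow_succ, ← pow_eq_pow_mod _ h]

lemma zmod_induction {N : ℕ} [NeZero N] {P : ZMod N → Prop} (h0 : P 0)
    (hs : ∀ m, P (m - 1) → P m) (m : ZMod N) : P m := by
  have : ∀ n : ℕ, P (n : ZMod N) := by
    intro n
    induction n with
    | zero => simpa using h0
    | succ n ih => exact hs _ (by simpa using ih)
  simpa using this m.val

/-- Going once around `ℤ/N`, a zero coordinate would propagate to `v 0 = 1`. -/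
lemma ne_zero_of_recursion {N : ℕ} [NeZero N] {v ρ : ZMod N → ℂ} (h0 : v 0 = 1)
    (h : ∀ m, v m = v (m - 1) * ρ m) (m : ZMod N) : v m ≠ 0 := by
  intro hm
  have : ∀ n : ZMod N, v (m + n) = 0 := by
    refine zmod_induction (by simpa using hm) fun n hn => ?_
    rw [h, add_sub_assoc, hn, zero_mul]
  have := this (-m)
  rw [add_neg_cancel, h0] at this
  exact one_ne_zero this

/-- Shifting `ω^m` to `ω^(m-1)` in the denominator of the recursion multiplies the solution by
the ratio of the end factors; this is the local form of `τ₋`. -/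
lemma local_minus {N : ℕ} [NeZero N] {ω q : ℂ} (hω : ω ^ N = 1) (hq : q ^ 2 = ω) (hq0 : q ≠ 0)
    {a b c d x ξ η : ℂ} {v w : ZMod N → ℂ} (hξ : ξ ≠ 0)
    (hnd : ∀ m : ZMod N, η * x * c * ω ^ m.val - d ≠ 0)
    (hv0 : v 0 = 1) (hv : ∀ m : ZMod N, v m = v (m - 1) *
      ((η * a * ω ^ m.val - x * b) / (-ξ * (η * x * c * ω ^ m.val - d))))
    (hw0 : w 0 = 1) (hw : ∀ m : ZMod N, w m = w (m - 1) *
      ((q⁻¹ * η * a * ω ^ m.val - q⁻¹ * x * b) /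
        (-(q⁻¹ * ξ) * (q⁻¹ * η * (q⁻¹ * x) * c * ω ^ m.val - d)))) (m : ZMod N) :
    (d - x * η * c * ω ^ m.val) * v m = (d - x * η * c) * w m := by
  refine zmod_induction (P := fun m => (d - x * η * c * ω ^ m.val) * v m =
    (d - x * η * c) * w m) ?_ ?_ m
  · simp [hv0, hw0]
  · intro m ih
    have h1 := hnd m
    have h2 := hnd (m - 1)
    rw [hv m, hw m, ← mul_assoc (d - x * η * c), ← ih]
    rw [root_pow_val_sub_one hω m] at h1 ⊢
    generalize ω ^ (m - 1).val = u at *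
    subst hq
    have e : q⁻¹ * η * (q⁻¹ * x) * c * (u * q ^ 2) - d = η * x * c * u - d := by
      field_simp
    rw [e]
    have h3 : d - x * η * c * u ≠ 0 := fun h => h2 (by linear_combination -h)
    generalize hD : η * x * c * u - d = D at *
    generalize hE : η * x * c * (u * q ^ 2) - d = E at *
    have hD' : d - x * η * c * u = -D := by linear_combination -hD
    have hE' : d - x * η * c * (u * q ^ 2) = -E := by linear_combination -hE
    rw [hD', hE']
    field_simp

/-- Shifting `ω^m` to `ω^(m-1)` in the numerator of the recursion, up to the factor `ω`; this is
the local form of `τ₊`. The left side is the surviving lower diagonal entry of the gauged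
`L`-operator. -/
lemma local_plus {N : ℕ} [NeZero N] {ω q : ℂ} (hω : ω ^ N = 1) (hq : q ^ 2 = ω) (hq0 : q ≠ 0)
    {a b c d x ξ η : ℂ} {v w : ZMod N → ℂ} (hξ : ξ ≠ 0)
    (hnd : ∀ m : ZMod N, η * x * c * ω ^ m.val - d ≠ 0)
    (hv0 : v 0 = 1) (hv : ∀ m : ZMod N, v m = v (m - 1) *
      ((η * a * ω ^ m.val - x * b) / (-ξ * (η * x * c * ω ^ m.val - d))))
    (hw0 : w 0 = 1) (hw : ∀ m : ZMod N, w m = w (m - 1) *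
      ((q⁻¹ * η * a * ω ^ m.val - q * x * b) /
        (-(q⁻¹ * ξ) * (q⁻¹ * η * (q * x) * c * ω ^ m.val - d)))) (m : ZMod N) :
    a * ω ^ m.val * v (m - 1) + ξ * x * c * ω ^ m.val * v m =
      ξ * (a * d - x ^ 2 * b * c) / (η * a - x * b) * w m := by
  -- No numerator of the recursion vanishes, since no `v m` does.
  have hnum : ∀ m : ZMod N, η * a * ω ^ m.val - x * b ≠ 0 := fun m h =>
    ne_zero_of_recursion hv0 hv m (by rw [hv m, h]; simp)
  have hval : ∀ m : ZMod N, a * ω ^ m.val * v (m - 1) + ξ * x * c * ω ^ m.val * v m =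
      ξ * (a * d - x ^ 2 * b * c) * (ω ^ m.val * v m / (η * a * ω ^ m.val - x * b)) := by
    intro m
    have h1 := hnum m
    have h2 := hnd m
    rw [hv m]
    generalize hD : η * x * c * ω ^ m.val - d = D at *
    generalize hE : η * a * ω ^ m.val - x * b = E at *
    field_simp
    linear_combination ω ^ m.val * v (m - 1) * (x * c * hE - a * hD)
  have hrec : ∀ m : ZMod N, ω ^ m.val * v m / (η * a * ω ^ m.val - x * b) =
      w m / (η * a - x * b) := by
    refine zmod_induction ?_ ?_
    · simp [hv0, hw0]
    · intro m ih
      have h1 := hnum m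
      have h2 := hnum (m - 1)
      have h3 := hnd m
      rw [hw m, mul_div_right_comm (w (m - 1)), ← ih, hv m]
      rw [root_pow_val_sub_one hω m] at h1 h3 ⊢
      generalize ω ^ (m - 1).val = u at *
      subst hq
      have e : q⁻¹ * η * (q * x) * c * (u * q ^ 2) - d = η * x * c * (u * q ^ 2) - d := by
        field_simp
      have e' : q⁻¹ * η * a * (u * q ^ 2) - q * x * b = q * (η * a * u - x * b) := by
        field_simp
      rw [e, e']
      generalize η * x * c * (u * q ^ 2) - d = D at *
      generalize η * a * (u * q ^ 2) - x * b = E at *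
      generalize η * a * u - x * b = F at *
      field_simp
  rw [hval, hrec]
  ring

/-! ### The `L`-operator on a local vector -/

lemma Xop_mulVec (N : ℕ) [NeZero N] (v : ZMod N → ℂ) (m : ZMod N) :
    (Xop N).mulVec v m = v (m - 1) := by
  simp [Xop, Matrix.mulVec, dotProduct]

lemma Zop_mulVec (N : ℕ) [NeZero N] (ω : ℂ) (v : ZMod N → ℂ) (m : ZMod N) :
    (Zop N ω).mulVec v m = ω ^ m.val * v m := by
  simp [Zop, Matrix.mulVec_diagonal]

/-- The `2 × 2` matrix of `m`-th coordinates of the entries of `L_h(x)` applied to `v`. -/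
lemma Lop_mulVec (N : ℕ) [NeZero N] (ω a b c d x : ℂ) (v : ZMod N → ℂ) (m : ZMod N) :
    (Matrix.of fun α β => (Lop N ω (a, b, c, d) x α β).mulVec v m :
        Matrix (Fin 2) (Fin 2) ℂ) =
      !![a * ω ^ m.val * v (m - 1), x * b * v (m - 1); x * c * ω ^ m.val * v m, d * v m] := by
  ext α β
  fin_cases α <;> fin_cases β <;>
    simp [Lop, Yop, Matrix.smul_mulVec, ← Matrix.mulVec_mulVec, Xop_mulVec, Zop_mulVec, mul_assoc]

/-- at a nondegenerate point `p` of the spectral curve whose images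
`τ₋(p)` and `τ₊(p)` are also nondegenerate, the transfer matrix decouples the Baxter
vector: `T_{h⃗}(x)|p⟩ = Δ₋(p)|τ₋p⟩ + Δ₊(p)|τ₊p⟩`. -/
theorem transfer_action_on_baxter (M L : ℕ) [NeZero L] (hM : 1 ≤ M) (ω : ℂ)
    (hω : IsPrimitiveRoot ω (2 * M + 1)) (q : ℂ) (hq : q = ω ^ (M + 1))
    (a b c d : ZMod L → ℂ) (x : ℂ) (ξ : ZMod L → ℂ)
    (hp : onCurve (2 * M + 1) L a b c d x ξ)
    (hnd : nondeg (2 * M + 1) L ω a b c d x ξ)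
    (hndm : nondeg (2 * M + 1) L ω a b c d (q⁻¹ * x) (fun j => q⁻¹ * ξ j))
    (hndp : nondeg (2 * M + 1) L ω a b c d (q * x) (fun j => q⁻¹ * ξ j))
    (v wm wp : ZMod L → ZMod (2 * M + 1) → ℂ)
    (hv : isBaxterFamily (2 * M + 1) L ω a b c d x ξ v)
    (hwm : isBaxterFamily (2 * M + 1) L ω a b c d (q⁻¹ * x) (fun j => q⁻¹ * ξ j) wm)
    (hwp : isBaxterFamily (2 * M + 1) L ω a b c d (q * x) (fun j => q⁻¹ * ξ j) wp) :
    (transfer (2 * M + 1) L ω (fun j => (a j, b j, c j, d j)) x).mulVec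
        (baxVec (2 * M + 1) L v) =
      DeltaMinus L c d x ξ • baxVec (2 * M + 1) L wm +
        DeltaPlus L a b c d x ξ • baxVec (2 * M + 1) L wp := by
  have hω1 : ω ^ (2 * M + 1) = 1 := hω.pow_eq_one
  have hω0 : ω ≠ 0 := hω.ne_zero (by omega)
  have hq0 : q ≠ 0 := hq ▸ pow_ne_zero _ hω0
  have hq2 : q ^ 2 = ω := by
    rw [hq, ← pow_mul, show (M + 1) * 2 = (2 * M + 1) + 1 by ring, pow_succ, hω1, one_mul]
  funext k
  rw [transfer, Matrix.add_mulVec, Pi.add_apply, mono]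
  have hfin := finRange_map_cast L (fun j : ZMod L =>
    (Lop (2 * M + 1) ω (a j, b j, c j, d j) x).map (emb (2 * M + 1) L j))
  rw [hfin, prod_emb_mulVec _ _ (fun j => Lop (2 * M + 1) ω (a j, b j, c j, d j) x) v _
      (nodup_range_cast L), prod_emb_mulVec _ _
      (fun j => Lop (2 * M + 1) ω (a j, b j, c j, d j) x) v _ (nodup_range_cast L)]
  have hempty : Finset.univ.filter
      (fun j : ZMod L => j ∉ (List.range L).map fun i : ℕ => (i : ZMod L)) = ∅ := by
    refine Finset.filter_eq_empty_iff.2 fun j _ => not_not.2 ?_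
    exact List.mem_map.2 ⟨j.val, List.mem_range.2 (ZMod.val_lt j), by simp⟩
  rw [hempty, Finset.prod_empty, mul_one, mul_one, ← Matrix.trace_fin_two]
  simp only [Lop_mulVec]
  rw [trace_prod_of_gauge L _ ξ (fun j => (d j - x * ξ (j + 1) * c j) * wm j (k j))
    (fun j => ξ j * (a j * d j - x ^ 2 * b j * c j) / (ξ (j + 1) * a j - x * b j) * wp j (k j))
    (fun j => (a j * ω ^ (k j).val * v j (k j - 1) +
        (ξ j - 1) * (x * c j * ω ^ (k j).val * v j (k j))) * (1 - ξ (j + 1)) +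
      (x * b j * v j (k j - 1) + (ξ j - 1) * (d j * v j (k j))))]
  · simp [DeltaMinus, DeltaPlus, baxVec, Finset.prod_mul_distrib]
  · intro j
    obtain ⟨hξ, -, hD⟩ := hnd j
    have hm := local_minus hω1 hq2 hq0 hξ hD (hv j).1 (hv j).2 (hwm j).1 (hwm j).2 (k j)
    have hpl := local_plus hω1 hq2 hq0 hξ hD (hv j).1 (hv j).2 (hwp j).1 (hwp j).2 (k j)
    -- The recursion, cleared of denominators: the lower left gauged entry is zero.
    have hker : v j (k j - 1) * (ξ (j + 1) * a j * ω ^ (k j).val - x * b j) +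
        ξ j * v j (k j) * (ξ (j + 1) * x * c j * ω ^ (k j).val - d j) = 0 := by
      have h2 := hD (k j)
      rw [(hv j).2 (k j)]
      generalize ξ (j + 1) * x * c j * ω ^ (k j).val - d j = D at *
      field_simp
      ring
    rw [← hm, ← hpl]
    ext α β
    fin_cases α <;> fin_cases β <;> simp [gaugeA, Matrix.mul_apply, Fin.sum_univ_two]
    · linear_combination hker
    · linear_combination (ξ (j + 1) - 1) * hker
    · ring
    · linear_combination -hker

end
end
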